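/- arXiv:2008.00421 — 3 statements merged into one kernel-verified Lean document; each statement's English description precedes it below -/
import Mathlib

section
/- Let C_Q = (c, s) be a constraint atom with n arguments over α and C_S = (c', s') a constraint atom with n arguments over α' such that Set(C_Q) ⊆ Set(C_S). Let (H r)_{r : R} be a family of constraint atoms with n arguments, H r = (d r, t r) over variable type β r. Put R_Q := { r : R | C_Q unifies with H r }, R_S := { r : R | C_S unifies with H r }, and let G := G(C_S, (H r)_{r ∈ R_S \ R_Q}) be the negative-constraint valuation set of C_S with respect to the subfamily indexed by R_S \ R_Q. Then { r : R | there exist v : α' → M with c'.Realize v and v ∈ G, and w : β r → M with (d r).Realize w and (s' i).realize v = (t r i).realize w for all i } = R_Q; i.e., the rules unifiable with the symbolic atom restricted by the negative constraint are exactly those unifiable with the concrete atom. -/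
/-! A valuation of the concrete atom and a valuation of the symbolic atom
with the same argument tuple (supplied by `Set(C_Q) ⊆ Set(C_S)`) unify with the same rules.
Hence such a symbolic valuation satisfies the negative constraint: a rule excluded by it, being in
`R_S \ R_Q`, would unify with the concrete atom. Conversely, a rule unifying with the restricted
symbolic atom lies in `R_S`, and if it were not in `R_Q` the negative constraint would exclude
exactly the unifying valuation. -/

open FirstOrder

/-- The denotation `Set(C)` of a constraint atom `C = (c, s)` with `n` arguments
over the variable type `α`. -/
def catomSet (L : FirstOrder.Language) (M : Type*) [L.Structure M] {α : Type*} {n : ℕ}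
    (c : L.Formula α) (s : Fin n → L.Term α) : Set (Fin n → M) :=
  {x | ∃ v : α → M, c.Realize v ∧ ∀ i, (s i).realize v = x i}

/-- Two constraint atoms `C = (c, s)` over `α` and `H = (d, t)` over `β` unify in `M`. -/
def unify (L : FirstOrder.Language) (M : Type*) [L.Structure M] {α β : Type*} {n : ℕ}
    (c : L.Formula α) (s : Fin n → L.Term α)
    (d : L.Formula β) (t : Fin n → L.Term β) : Prop :=
  ∃ (v : α → M) (w : β → M), c.Realize v ∧ d.Realize w ∧
    ∀ i, (s i).realize v = (t i).realize w

/-- The negative-constraint valuation set `G(C, 𝓗)` for `C = (c, s)` over `α` and a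
family `𝓗 = (H k)` with `H k = (d k, t k)` over `β k`.  (It does not depend on `c`.) -/
def negSet (L : FirstOrder.Language) (M : Type*) [L.Structure M] {α : Type*} {n : ℕ}
    {K : Type*} {β : K → Type*}
    (s : Fin n → L.Term α) (d : ∀ k, L.Formula (β k)) (t : ∀ k, Fin n → L.Term (β k)) :
    Set (α → M) :=
  {v | ∀ k, ∀ w : β k → M,
    ¬ ((∀ i, (s i).realize v = (t k i).realize w) ∧ (d k).Realize w)}

/-- `Set(C ∧ γ)` where `γ = neg_constr(C, 𝓗)`. -/
def catomGammaSet (L : FirstOrder.Language) (M : Type*) [L.Structure M] {α : Type*} {n : ℕ}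
    {K : Type*} {β : K → Type*}
    (c : L.Formula α) (s : Fin n → L.Term α)
    (d : ∀ k, L.Formula (β k)) (t : ∀ k, Fin n → L.Term (β k)) : Set (Fin n → M) :=
  {x | ∃ v : α → M, c.Realize v ∧ v ∈ negSet L M s d t ∧ ∀ i, (s i).realize v = x i}

/-- `C ∧ γ` unifies with the constraint atom `H = (d, t)` over `β`, where
`γ = neg_constr(C, 𝓗)` and `𝓗` is given by `(dm, tm)`. -/
def unifyGamma (L : FirstOrder.Language) (M : Type*) [L.Structure M] {α β : Type*} {n : ℕ}
    {K : Type*} {βm : K → Type*}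
    (c : L.Formula α) (s : Fin n → L.Term α)
    (dm : ∀ k, L.Formula (βm k)) (tm : ∀ k, Fin n → L.Term (βm k))
    (d : L.Formula β) (t : Fin n → L.Term β) : Prop :=
  ∃ (v : α → M) (w : β → M), c.Realize v ∧ v ∈ negSet L M s dm tm ∧ d.Realize w ∧
    ∀ i, (s i).realize v = (t i).realize w

/-- The rules unifiable with the symbolic atom restricted by the negative constraint
`neg_constr(C_S, 𝓗|_{R_S \ R_Q})` are exactly those unifiable with the concrete atom. -/
theorem rules_negConstr_eq
    {L : FirstOrder.Language} {M : Type*} [L.Structure M] {α α' : Type*} {n : ℕ}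
    {R : Type*} {β : R → Type*}
    (c : L.Formula α) (s : Fin n → L.Term α)
    (c' : L.Formula α') (s' : Fin n → L.Term α')
    (d : ∀ r, L.Formula (β r)) (t : ∀ r, Fin n → L.Term (β r))
    (hsub : catomSet L M c s ⊆ catomSet L M c' s') :
    {r : R | unifyGamma L M c' s'
        (fun k : ↥({r : R | unify L M c' s' (d r) (t r)}
                    \ {r : R | unify L M c s (d r) (t r)}) => d k.1)
        (fun k => t k.1) (d r) (t r)}
      = {r : R | unify L M c s (d r) (t r)} := by
  ext r
  simp only [Set.mem_ofPred_eq]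
  constructor
  · rintro ⟨v, w, hc, hneg, hd, he⟩
    by_contra hr
    exact hneg ⟨r, ⟨v, w, hc, hd, he⟩, hr⟩ w ⟨he, hd⟩
  · rintro ⟨v, w, hc, hd, he⟩
    -- a valuation of the symbolic atom denoting the same tuple as `v`
    obtain ⟨v', hc', he'⟩ := hsub ⟨v, hc, fun _ => rfl⟩
    refine ⟨v', w, hc', ?_, hd, fun i => (he' i).trans (he i)⟩
    rintro ⟨k, _, hkQ⟩ u ⟨hu, hdu⟩
    exact hkQ ⟨v, u, hc, hdu, fun i => (he' i).symm.trans (hu i)⟩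
end

section
/- For every d ∈ 𝓟 we have Set(C∧d) ⊆ Set(C ∧ γ), where γ = neg_constr(C, 𝓗⁻); i.e., C ∧ γ is maximal among the solutions of the constraint selective unification problem. -/
open FirstOrder

/-- The constraint selective unification problem set `𝓟` for `C = (c, s)` over `α`,
positive family `𝓗⁺` given by `(dp, tp)`, negative family `𝓗⁻` given by `(dm, tm)`,
and fresh variables `ρ`. -/
def CSUP (L : FirstOrder.Language) (M : Type*) [L.Structure M] {α : Type*} {n : ℕ}
    (ρ : Type*) {Kp Km : Type*} {βp : Kp → Type*} {βm : Km → Type*}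
    (c : L.Formula α) (s : Fin n → L.Term α)
    (dp : ∀ k, L.Formula (βp k)) (tp : ∀ k, Fin n → L.Term (βp k))
    (dm : ∀ k, L.Formula (βm k)) (tm : ∀ k, Fin n → L.Term (βm k)) :
    Set (L.Formula (α ⊕ ρ)) :=
  {d | (∃ u : α ⊕ ρ → M, ((c.relabel Sum.inl) ⊓ d).Realize u) ∧
    (∀ k : Kp, unify L M ((c.relabel Sum.inl) ⊓ d)
      (fun i => (s i).relabel Sum.inl) (dp k) (tp k)) ∧
    (∀ k : Km, ¬ unify L M ((c.relabel Sum.inl) ⊓ d)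
      (fun i => (s i).relabel Sum.inl) (dm k) (tm k))}

/-- `C ∧ γ` is maximal among the solutions of the constraint selective unification
problem: for every `d ∈ 𝓟`, `Set(C ∧ d) ⊆ Set(C ∧ γ)`. -/
theorem csup_subset_gamma
    {L : FirstOrder.Language} {M : Type*} [L.Structure M] {α : Type*} {n : ℕ}
    (ρ : Type*) {Kp Km : Type*} {βp : Kp → Type*} {βm : Km → Type*}
    [Finite Kp] [Finite Km]
    (c : L.Formula α) (s : Fin n → L.Term α)
    (dp : ∀ k, L.Formula (βp k)) (tp : ∀ k, Fin n → L.Term (βp k))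
    (dm : ∀ k, L.Formula (βm k)) (tm : ∀ k, Fin n → L.Term (βm k))
    (hc : ∃ v : α → M, c.Realize v)
    (hup : ∀ k, unify L M c s (dp k) (tp k))
    (hum : ∀ k, unify L M c s (dm k) (tm k))
    (d : L.Formula (α ⊕ ρ)) (hd : d ∈ CSUP L M ρ c s dp tp dm tm) :
    catomSet L M ((c.relabel Sum.inl) ⊓ d) (fun i => (s i).relabel Sum.inl)
      ⊆ catomGammaSet L M c s dm tm := by
  rintro x ⟨u, hu, hx⟩
  have hcu : c.Realize (u ∘ Sum.inl) :=
    Language.Formula.realize_relabel.1 (Language.Formula.realize_inf.1 hu).1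
  refine ⟨u ∘ Sum.inl, hcu, ?_, fun i => ?_⟩
  -- A common instance of `H k` at `u ∘ Sum.inl` would make `C ∧ d` unify with `H k` via `u`.
  · rintro k w ⟨hst, hw⟩
    exact hd.2.2 k ⟨u, w, hu, hw, fun i => Language.Term.realize_relabel.trans (hst i)⟩
  · exact Language.Term.realize_relabel.symm.trans (hx i)
end

section
/- If 𝓟 ≠ ∅, then C ∧ γ unifies with every element of 𝓗⁺, where γ = neg_constr(C, 𝓗⁻). -/
open FirstOrder

/-- If `𝓟 ≠ ∅` then `C ∧ γ` unifies with every element of `𝓗⁺`. -/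
theorem unifyGamma_of_csup_nonempty
    {L : FirstOrder.Language} {M : Type*} [L.Structure M] {α : Type*} {n : ℕ}
    (ρ : Type*) {Kp Km : Type*} {βp : Kp → Type*} {βm : Km → Type*}
    [Finite Kp] [Finite Km]
    (c : L.Formula α) (s : Fin n → L.Term α)
    (dp : ∀ k, L.Formula (βp k)) (tp : ∀ k, Fin n → L.Term (βp k))
    (dm : ∀ k, L.Formula (βm k)) (tm : ∀ k, Fin n → L.Term (βm k))
    (hc : ∃ v : α → M, c.Realize v)
    (hup : ∀ k, unify L M c s (dp k) (tp k))
    (hum : ∀ k, unify L M c s (dm k) (tm k))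
    (hne : CSUP L M ρ c s dp tp dm tm ≠ ∅) :
    ∀ k, unifyGamma L M c s dm tm (dp k) (tp k) := by
  obtain ⟨e, -, hpos, hneg⟩ := Set.nonempty_iff_ne_empty.mpr hne
  intro k
  obtain ⟨u, w, hu, hw, heq⟩ := hpos k
  have hcu : c.Realize (u ∘ Sum.inl) :=
    Language.Formula.realize_relabel.mp (Language.Formula.realize_inf.mp hu).1
  -- The part of `u` on the variables of `C` avoids every negative atom: the same `u` would
  -- otherwise witness that the solution `e` unifies with that atom.
  refine ⟨u ∘ Sum.inl, w, hcu, fun k' w' ⟨hst, hd⟩ => ?_, hw, fun i => ?_⟩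
  · exact hneg k' ⟨u, w', hu, hd, fun i => by
      simpa only [Language.Term.realize_relabel] using hst i⟩
  · simpa only [Language.Term.realize_relabel] using heq i
end
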